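/- Hölder continuity of the collision operator: let M, M' > 0 and N ≥ 0, and let V_M be a set of nonnegative functions in L¹_{N+2}(ℝ^d) whose L¹_{N+2}-norms are bounded above by M and whose L¹-norms are bounded below by M'. Then there exists a constant C_{M,M',N} > 0 such that for all g, h ∈ V_M, ‖Q[g] − Q[h]‖_{L¹_N} ≤ C_{M,M',N} · ‖g − h‖_{L¹_N}^{1/2}. -/

import Mathlib

noncomputable section
open MeasureTheory Filter Set Real

abbrev Sp (d : ℕ) : Type := EuclideanSpace ℝ (Fin d)

/-- Dispersion relation ω_k = √(λ1 + λ2 |k|²). -/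
def omg (l1 l2 : ℝ) {d : ℕ} (k : Sp d) : ℝ := Real.sqrt (l1 + l2 * ‖k‖ ^ 2)

/-- Zeroth moment 𝔐₀[f] = ∫ f. -/
def M0 {d : ℕ} (f : Sp d → ℝ) : ℝ := ∫ k, f k

/-- Resonance broadening Γ_{k,k1,k2}[f]. -/
def Gam {d : ℕ} (f : Sp d → ℝ) (k k1 k2 : Sp d) : ℝ :=
  (‖k‖ ^ 2 + ‖k1‖ ^ 2 + ‖k2‖ ^ 2) * M0 f

/-- Lorentzian L_f(ζ; k,k1,k2) = Γ/(ζ² + Γ²). -/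
def Lor {d : ℕ} (f : Sp d → ℝ) (z : ℝ) (k k1 k2 : Sp d) : ℝ :=
  Gam f k k1 k2 / (z ^ 2 + Gam f k k1 k2 ^ 2)

/-- Collision kernel |V_{k,k1,k2}|² = |k||k1||k2|. -/
def Vsq {d : ℕ} (k k1 k2 : Sp d) : ℝ := ‖k‖ * ‖k1‖ * ‖k2‖

/-- Collision operator Q[f] after eliminating the Dirac delta enforcing k = k1 + k2. -/
def Qop (l1 l2 : ℝ) {d : ℕ} (f : Sp d → ℝ) (k : Sp d) : ℝ :=
  (∫ k1, Vsq k k1 (k - k1) *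
      Lor f (omg l1 l2 k - omg l1 l2 k1 - omg l1 l2 (k - k1)) k k1 (k - k1) *
      (f k1 * f (k - k1) - f k * f k1 - f k * f (k - k1)))
  - 2 * ∫ k2, Vsq (k + k2) k k2 *
      Lor f (omg l1 l2 (k + k2) - omg l1 l2 k - omg l1 l2 k2) (k + k2) k k2 *
      (f k * f k2 - f k * f (k + k2) - f (k + k2) * f k2)

/-- Weighted L¹ norm ‖g‖_{L¹_N} = ∫ |g| ω^N. -/
def wnorm (l1 l2 N : ℝ) {d : ℕ} (g : Sp d → ℝ) : ℝ := ∫ k, |g k| * omg l1 l2 k ^ N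

/-- N-th moment 𝔐_N[g] = ∫ ω^N g. -/
def Mom (l1 l2 N : ℝ) {d : ℕ} (g : Sp d → ℝ) : ℝ := ∫ k, omg l1 l2 k ^ N * g k

/-! The operator is in fact Lipschitz, and the Hölder bound interpolates this with the trivial
bound `‖f - g‖ ≤ ‖f‖ + ‖g‖`. Both integrals in `Q` integrate one rate over resonant triads
`k = k₁ + k₂`, which is a signed sum of three terms `κ_f · f(x) f(y)`, one for each pair `x, y` of
the triad. By AM-GM, `|V|²` is at most `|x| (|k|² + |k₁|² + |k₂|²)` for each wave vector `x` of the
triad, so the broadening `Γ` cancels the quadratic factor: the kernel `κ_f` is at most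
`|x| / 𝔐₀[f]` and depends on `f` only through `𝔐₀[f]`, in a Lipschitz way. Up to a constant, the
dispersion `ω` at one wave vector of the triad is at most its product at any two of them, and any
two of them range over `ℝᵈ × ℝᵈ` by a measure-preserving change of variables, so each term is
estimated by a product of two weighted `L¹` norms. -/

section PairIntegral

variable {Z X Y : Type*} [MeasurableSpace Z] [MeasurableSpace X] [MeasurableSpace Y]
  {ν : Measure Z} {μ : Measure X} {ρ : Measure Y}

lemma integral_comp_of_measurePreserving {T : Z → X} (hT : MeasurePreserving T ν μ) {F : X → ℝ}
    (hF : AEStronglyMeasurable F μ) : ∫ z, F (T z) ∂ν = ∫ x, F x ∂μ := by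
  rw [← hT.map_eq] at hF ⊢
  exact (integral_map hT.measurable.aemeasurable hF).symm

lemma integral_abs_sub_sub_le {F G H : Z → ℝ} (hF : Integrable F ν) (hG : Integrable G ν)
    (hH : Integrable H ν) :
    ∫ z, |F z - G z - H z| ∂ν ≤ ∫ z, |F z| ∂ν + ∫ z, |G z| ∂ν + ∫ z, |H z| ∂ν := by
  have hFG : Integrable (fun z => |F z| + |G z|) ν := hF.abs.add hG.abs
  rw [← integral_add hF.abs hG.abs, ← integral_add hFG hH.abs]
  refine integral_mono ((hF.sub hG).sub hH).abs (hFG.add hH.abs) fun z => ?_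
  calc |F z - G z - H z| ≤ |F z - G z| + |H z| := abs_sub _ _
    _ ≤ |F z| + |G z| + |H z| := by gcongr; exact abs_sub _ _

lemma integral_abs_integral_mul_le [SFinite μ] [SFinite ρ] {F : X × Y → ℝ} {w : X → ℝ}
    (hw : ∀ x, 0 ≤ w x) (hF : Integrable (fun z => F z * w z.1) (μ.prod ρ)) :
    ∫ x, |∫ y, F (x, y) ∂ρ| * w x ∂μ ≤ ∫ z, |F z * w z.1| ∂(μ.prod ρ) := by
  rw [integral_prod _ hF.abs]
  refine integral_mono_of_nonneg (.of_forall fun x => mul_nonneg (abs_nonneg _) (hw x))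
    hF.abs.integral_prod_left (.of_forall fun x => ?_)
  calc |∫ y, F (x, y) ∂ρ| * w x = |∫ y, F (x, y) * w x ∂ρ| := by
        rw [integral_mul_const, abs_mul, abs_of_nonneg (hw x)]
    _ ≤ ∫ y, |F (x, y) * w x| ∂ρ := abs_integral_le_integral_abs

section Bilinear

variable {T : Z → X × Y} {κ : Z → ℝ} {u a : X → ℝ} {v b : Y → ℝ} {E : ℝ}

lemma abs_kernel_mul_le {k s t α β : ℝ} (hk : |k| ≤ E * (α * β)) :
    |k * (s * t)| ≤ E * ((|s| * α) * (|t| * β)) := by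
  rw [abs_mul, abs_mul]
  calc |k| * (|s| * |t|) ≤ E * (α * β) * (|s| * |t|) := by gcongr
    _ = E * ((|s| * α) * (|t| * β)) := by ring

lemma integrable_kernel_mul (hT : MeasurePreserving T ν (μ.prod ρ))
    (hκ : AEStronglyMeasurable κ ν) (hu : AEStronglyMeasurable u μ) (hv : AEStronglyMeasurable v ρ)
    (hua : Integrable (fun x => |u x| * a x) μ) (hvb : Integrable (fun y => |v y| * b y) ρ)
    (hbound : ∀ z, |κ z| ≤ E * (a (T z).1 * b (T z).2)) :
    Integrable (fun z => κ z * (u (T z).1 * v (T z).2)) ν :=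
  ((hT.integrable_comp_of_integrable (hua.mul_prod hvb)).const_mul E).mono'
    (hκ.mul ((hu.comp_fst.mul hv.comp_snd).comp_measurePreserving hT))
    (.of_forall fun z => abs_kernel_mul_le (hbound z))

lemma integral_abs_kernel_mul_le [SFinite μ] [SFinite ρ] (hT : MeasurePreserving T ν (μ.prod ρ))
    (hua : Integrable (fun x => |u x| * a x) μ) (hvb : Integrable (fun y => |v y| * b y) ρ)
    (hbound : ∀ z, |κ z| ≤ E * (a (T z).1 * b (T z).2)) :
    ∫ z, |κ z * (u (T z).1 * v (T z).2)| ∂ν ≤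
      E * ((∫ x, |u x| * a x ∂μ) * ∫ y, |v y| * b y ∂ρ) := by
  have huv := hua.mul_prod hvb
  rw [← integral_prod_mul, ← integral_comp_of_measurePreserving hT huv.aestronglyMeasurable,
    ← integral_const_mul]
  exact integral_mono_of_nonneg (.of_forall fun z => abs_nonneg _)
    ((hT.integrable_comp_of_integrable huv).const_mul E)
    (.of_forall fun z => abs_kernel_mul_le (hbound z))

end Bilinear

lemma integral_abs_quadratic_sub_le [SFinite μ] {T : Z → X × X} {κ κ' : Z → ℝ} {u v a b : X → ℝ}
    {E E' : ℝ} (hT : MeasurePreserving T ν (μ.prod μ))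
    (hκ : AEStronglyMeasurable κ ν) (hκ' : AEStronglyMeasurable κ' ν)
    (hu : AEStronglyMeasurable u μ) (hv : AEStronglyMeasurable v μ)
    (hua : Integrable (fun x => |u x| * a x) μ) (hub : Integrable (fun x => |u x| * b x) μ)
    (hvb : Integrable (fun x => |v x| * b x) μ) (huva : Integrable (fun x => |u x - v x| * a x) μ)
    (hsub : ∀ z, |κ z - κ' z| ≤ E * (a (T z).1 * b (T z).2))
    (hab : ∀ z, |κ' z| ≤ E' * (a (T z).1 * b (T z).2))
    (hba : ∀ z, |κ' z| ≤ E' * (b (T z).1 * a (T z).2)) :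
    ∫ z, |κ z * (u (T z).1 * u (T z).2) - κ' z * (v (T z).1 * v (T z).2)| ∂ν ≤
      E * ((∫ x, |u x| * a x ∂μ) * ∫ x, |u x| * b x ∂μ) +
      E' * ((∫ x, |u x - v x| * a x ∂μ) * ∫ x, |u x| * b x ∂μ) +
      E' * ((∫ x, |v x| * b x ∂μ) * ∫ x, |u x - v x| * a x ∂μ) := by
  simp only [abs_sub_comm (u _)] at huva ⊢
  have hvu := hv.sub hu
  calc _ = ∫ z, |(κ z - κ' z) * (u (T z).1 * u (T z).2)
          - κ' z * ((v (T z).1 - u (T z).1) * u (T z).2)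
          - κ' z * (v (T z).1 * (v (T z).2 - u (T z).2))| ∂ν := by
        refine integral_congr_ae (.of_forall fun z => congrArg abs ?_)
        ring
    _ ≤ _ := integral_abs_sub_sub_le (integrable_kernel_mul hT (hκ.sub hκ') hu hu hua hub hsub)
        (integrable_kernel_mul hT hκ' hvu hu huva hub hab)
        (integrable_kernel_mul hT hκ' hv hvu hvb huva hba)
    _ ≤ _ := by
        gcongr
        · exact integral_abs_kernel_mul_le hT hua hub hsub
        · exact integral_abs_kernel_mul_le hT huva hub hab
        · exact integral_abs_kernel_mul_le hT hvb huva hba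

end PairIntegral

section RealInequalities

lemma div_sq_add_sq_le_inv {Γ : ℝ} (hΓ : 0 < Γ) (ζ : ℝ) : Γ / (ζ ^ 2 + Γ ^ 2) ≤ Γ⁻¹ := by
  rw [inv_eq_one_div, div_le_div_iff₀ (by positivity) hΓ]
  nlinarith [sq_nonneg ζ]

lemma abs_div_sq_add_sq_sub_le {Γ Γ' : ℝ} (hΓ : 0 < Γ) (hΓ' : 0 < Γ') (ζ : ℝ) :
    |Γ / (ζ ^ 2 + Γ ^ 2) - Γ' / (ζ ^ 2 + Γ' ^ 2)| ≤ |Γ - Γ'| / (Γ * Γ') := by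
  have hsub : Γ / (ζ ^ 2 + Γ ^ 2) - Γ' / (ζ ^ 2 + Γ' ^ 2)
      = (Γ - Γ') * (ζ ^ 2 - Γ * Γ') / ((ζ ^ 2 + Γ ^ 2) * (ζ ^ 2 + Γ' ^ 2)) := by
    field_simp
    ring
  have hnum : |ζ ^ 2 - Γ * Γ'| ≤ ζ ^ 2 + Γ * Γ' := by
    have := mul_pos hΓ hΓ'
    rw [abs_le]
    constructor <;> nlinarith [sq_nonneg ζ]
  have hden : (ζ ^ 2 + Γ * Γ') * (Γ * Γ') ≤ (ζ ^ 2 + Γ ^ 2) * (ζ ^ 2 + Γ' ^ 2) := by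
    have : 0 ≤ ζ ^ 2 * ((Γ - Γ') ^ 2 + Γ * Γ' + ζ ^ 2) := by positivity
    nlinarith
  rw [hsub, abs_div, abs_mul, abs_of_pos (by positivity : 0 < (ζ ^ 2 + Γ ^ 2) * (ζ ^ 2 + Γ' ^ 2)),
    div_le_div_iff₀ (by positivity) (by positivity)]
  calc |Γ - Γ'| * |ζ ^ 2 - Γ * Γ'| * (Γ * Γ')
      ≤ |Γ - Γ'| * (ζ ^ 2 + Γ * Γ') * (Γ * Γ') := by gcongr
    _ ≤ |Γ - Γ'| * ((ζ ^ 2 + Γ ^ 2) * (ζ ^ 2 + Γ' ^ 2)) := by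
      rw [mul_assoc]
      gcongr

lemma le_rpow_one_sub_mul_rpow {x R θ : ℝ} (hx : 0 ≤ x) (hxR : x ≤ R) (hθ : 0 ≤ θ) (hθ_le : θ ≤ 1) :
    x ≤ R ^ (1 - θ) * x ^ θ :=
  calc x = x ^ (1 - θ) * x ^ θ := by
        rw [← Real.rpow_add_of_nonneg hx (sub_nonneg.2 hθ_le) hθ, sub_add_cancel, Real.rpow_one]
    _ ≤ R ^ (1 - θ) * x ^ θ := by gcongr

end RealInequalities

section Dispersion

variable {d : ℕ} {l1 l2 N : ℝ}

lemma measurable_omg : Measurable (omg l1 l2 : Sp d → ℝ) := by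
  unfold omg
  fun_prop

lemma omg_pos (hl1 : 0 < l1) (hl2 : 0 < l2) (k : Sp d) : 0 < omg l1 l2 k := by
  unfold omg
  positivity

lemma omg_rpow_nonneg (N : ℝ) (k : Sp d) : 0 ≤ omg l1 l2 k ^ N :=
  Real.rpow_nonneg (Real.sqrt_nonneg _) N

lemma sqrt_le_omg (hl2 : 0 < l2) (k : Sp d) : √l1 ≤ omg l1 l2 k :=
  Real.sqrt_le_sqrt (le_add_of_nonneg_right (by positivity))

lemma norm_le_omg_div_sqrt (hl1 : 0 < l1) (hl2 : 0 < l2) (k : Sp d) :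
    ‖k‖ ≤ omg l1 l2 k / √l2 := by
  rw [le_div_iff₀ (by positivity), omg]
  refine Real.le_sqrt_of_sq_le ?_
  rw [mul_pow, Real.sq_sqrt hl2.le]
  linarith

lemma omg_le_add (hl1 : 0 < l1) (hl2 : 0 < l2) {k x y : Sp d} (h : ‖k‖ ≤ ‖x‖ + ‖y‖) :
    omg l1 l2 k ≤ omg l1 l2 x + omg l1 l2 y := by
  have hx : omg l1 l2 x ^ 2 = l1 + l2 * ‖x‖ ^ 2 := Real.sq_sqrt (by positivity)
  have hy : omg l1 l2 y ^ 2 = l1 + l2 * ‖y‖ ^ 2 := Real.sq_sqrt (by positivity)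
  have hx_pos := omg_pos hl1 hl2 x
  have hy_pos := omg_pos hl1 hl2 y
  have hxy : l2 * (‖x‖ * ‖y‖) ≤ omg l1 l2 x * omg l1 l2 y :=
    calc l2 * (‖x‖ * ‖y‖)
        ≤ √l2 * √l2 * (omg l1 l2 x / √l2 * (omg l1 l2 y / √l2)) := by
          rw [Real.mul_self_sqrt hl2.le]
          gcongr <;> exact norm_le_omg_div_sqrt hl1 hl2 _
      _ = omg l1 l2 x * omg l1 l2 y := by field_simp
  refine Real.sqrt_le_iff.2 ⟨by positivity, ?_⟩
  calc l1 + l2 * ‖k‖ ^ 2 ≤ l1 + l2 * (‖x‖ + ‖y‖) ^ 2 := by gcongr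
    _ ≤ (omg l1 l2 x + omg l1 l2 y) ^ 2 := by nlinarith

lemma omg_le_mul (hl1 : 0 < l1) (hl2 : 0 < l2) {k x y : Sp d} (h : ‖k‖ ≤ ‖x‖ + ‖y‖) :
    omg l1 l2 k ≤ 2 / √l1 * (omg l1 l2 x * omg l1 l2 y) := by
  have hx := mul_le_mul_of_nonneg_left (sqrt_le_omg (l1 := l1) hl2 x) (omg_pos hl1 hl2 y).le
  have hy := mul_le_mul_of_nonneg_left (sqrt_le_omg (l1 := l1) hl2 y) (omg_pos hl1 hl2 x).le
  refine (omg_le_add hl1 hl2 h).trans ?_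
  rw [div_mul_eq_mul_div, le_div_iff₀ (by positivity)]
  linarith

lemma omg_rpow_le_of_le (hl1 : 0 < l1) (hl2 : 0 < l2) {s r : ℝ} (hsr : s ≤ r) (k : Sp d) :
    omg l1 l2 k ^ s ≤ √l1 ^ (s - r) * omg l1 l2 k ^ r := by
  have hk := omg_pos hl1 hl2 k
  calc omg l1 l2 k ^ s = omg l1 l2 k ^ (s - r) * omg l1 l2 k ^ r := by
        rw [← Real.rpow_add hk, sub_add_cancel]
    _ ≤ √l1 ^ (s - r) * omg l1 l2 k ^ r := by
        gcongr ?_ * _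
        exact Real.rpow_le_rpow_of_nonpos (by positivity) (sqrt_le_omg hl2 k) (sub_nonpos.2 hsr)

/-- The factor lost in dominating `|y| ω_k ^ N` by `ω_x ^ N ω_y ^ (N + 1)` when
`|k| ≤ |x| + |y|`. -/
def weightConst (l1 l2 N : ℝ) : ℝ := (2 / √l1) ^ N / √l2

lemma weightConst_pos (hl1 : 0 < l1) (hl2 : 0 < l2) : 0 < weightConst l1 l2 N := by
  unfold weightConst
  positivity

lemma norm_mul_omg_rpow_le (hl1 : 0 < l1) (hl2 : 0 < l2) (hN : 0 ≤ N) {k x y : Sp d}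
    (h : ‖k‖ ≤ ‖x‖ + ‖y‖) :
    ‖y‖ * omg l1 l2 k ^ N ≤ weightConst l1 l2 N * (omg l1 l2 x ^ N * omg l1 l2 y ^ (N + 1)) := by
  have hk := omg_pos hl1 hl2 k
  have hx := omg_pos hl1 hl2 x
  have hy := omg_pos hl1 hl2 y
  calc ‖y‖ * omg l1 l2 k ^ N
      ≤ omg l1 l2 y / √l2 * (2 / √l1 * (omg l1 l2 x * omg l1 l2 y)) ^ N := by
        gcongr
        · exact norm_le_omg_div_sqrt hl1 hl2 y
        · exact omg_le_mul hl1 hl2 h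
    _ = weightConst l1 l2 N * (omg l1 l2 x ^ N * omg l1 l2 y ^ (N + 1)) := by
        rw [Real.mul_rpow (by positivity) (by positivity), Real.mul_rpow hx.le hy.le,
          Real.rpow_add_one hy.ne', weightConst]
        ring

lemma abs_mul_omg_rpow_le (hl1 : 0 < l1) (hl2 : 0 < l2) (hN : 0 ≤ N) {c κ : ℝ} (hc : 0 ≤ c)
    {k x y : Sp d} (hκ : |κ| ≤ c * ‖y‖) (h : ‖k‖ ≤ ‖x‖ + ‖y‖) :
    |κ * omg l1 l2 k ^ N| ≤
      c * weightConst l1 l2 N * (omg l1 l2 x ^ N * omg l1 l2 y ^ (N + 1)) := by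
  rw [abs_mul, abs_of_nonneg (omg_rpow_nonneg N k)]
  calc |κ| * omg l1 l2 k ^ N ≤ c * ‖y‖ * omg l1 l2 k ^ N :=
        mul_le_mul_of_nonneg_right hκ (omg_rpow_nonneg N k)
    _ = c * (‖y‖ * omg l1 l2 k ^ N) := by ring
    _ ≤ c * (weightConst l1 l2 N * (omg l1 l2 x ^ N * omg l1 l2 y ^ (N + 1))) :=
        mul_le_mul_of_nonneg_left (norm_mul_omg_rpow_le hl1 hl2 hN h) hc
    _ = _ := by ring

end Dispersion

section WeightedNorm

variable {d : ℕ} {l1 l2 s r M M' : ℝ} {f g : Sp d → ℝ}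

lemma wnorm_nonneg : 0 ≤ wnorm l1 l2 s f :=
  integral_nonneg fun k => mul_nonneg (abs_nonneg _) (omg_rpow_nonneg s k)

lemma abs_mul_omg_rpow_le_of_le (hl1 : 0 < l1) (hl2 : 0 < l2) (hsr : s ≤ r) (t : ℝ) (k : Sp d) :
    |t| * omg l1 l2 k ^ s ≤ √l1 ^ (s - r) * (|t| * omg l1 l2 k ^ r) :=
  calc |t| * omg l1 l2 k ^ s ≤ |t| * (√l1 ^ (s - r) * omg l1 l2 k ^ r) := by
        gcongr
        exact omg_rpow_le_of_le hl1 hl2 hsr k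
    _ = _ := by ring

lemma wnorm_le_of_le (hl1 : 0 < l1) (hl2 : 0 < l2) (hsr : s ≤ r)
    (hf : Integrable (fun k => |f k| * omg l1 l2 k ^ r)) :
    wnorm l1 l2 s f ≤ √l1 ^ (s - r) * wnorm l1 l2 r f := by
  rw [wnorm, wnorm, ← integral_const_mul]
  exact integral_mono_of_nonneg
    (.of_forall fun k => mul_nonneg (abs_nonneg _) (omg_rpow_nonneg s k)) (hf.const_mul _)
    (.of_forall fun k => abs_mul_omg_rpow_le_of_le hl1 hl2 hsr (f k) k)

lemma integrable_abs_mul_omg_rpow_of_le (hl1 : 0 < l1) (hl2 : 0 < l2) (hsr : s ≤ r)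
    (hf : AEStronglyMeasurable f) (hfr : Integrable (fun k => |f k| * omg l1 l2 k ^ r)) :
    Integrable (fun k => |f k| * omg l1 l2 k ^ s) := by
  refine (hfr.const_mul (√l1 ^ (s - r))).mono'
    (hf.norm.mul (measurable_omg.pow_const s).aestronglyMeasurable) (.of_forall fun k => ?_)
  rw [Real.norm_of_nonneg (mul_nonneg (abs_nonneg _) (omg_rpow_nonneg s k))]
  exact abs_mul_omg_rpow_le_of_le hl1 hl2 hsr (f k) k

lemma abs_sub_mul_omg_rpow_le (k : Sp d) :
    |f k - g k| * omg l1 l2 k ^ s ≤ |f k| * omg l1 l2 k ^ s + |g k| * omg l1 l2 k ^ s := by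
  rw [← add_mul]
  exact mul_le_mul_of_nonneg_right (abs_sub _ _) (omg_rpow_nonneg s k)

lemma integrable_abs_sub_mul_omg_rpow (hf : AEStronglyMeasurable f) (hg : AEStronglyMeasurable g)
    (hfs : Integrable (fun k => |f k| * omg l1 l2 k ^ s))
    (hgs : Integrable (fun k => |g k| * omg l1 l2 k ^ s)) :
    Integrable (fun k => |f k - g k| * omg l1 l2 k ^ s) := by
  refine (hfs.add hgs).mono' ((hf.sub hg).norm.mul
    (measurable_omg.pow_const s).aestronglyMeasurable) (.of_forall fun k => ?_)
  rw [Real.norm_of_nonneg (mul_nonneg (abs_nonneg _) (omg_rpow_nonneg s k))]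
  exact abs_sub_mul_omg_rpow_le k

lemma wnorm_sub_le (hfs : Integrable (fun k => |f k| * omg l1 l2 k ^ s))
    (hgs : Integrable (fun k => |g k| * omg l1 l2 k ^ s)) :
    wnorm l1 l2 s (fun k => f k - g k) ≤ wnorm l1 l2 s f + wnorm l1 l2 s g := by
  simp only [wnorm]
  rw [← integral_add hfs hgs]
  exact integral_mono_of_nonneg
    (.of_forall fun k => mul_nonneg (abs_nonneg _) (omg_rpow_nonneg s k)) (hfs.add hgs)
    (.of_forall abs_sub_mul_omg_rpow_le)

/-- The set `V_M` of densities of order `s`: weighted norm at most `M` and total mass at least `M'`.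
Densities may change sign, the mass bound being imposed on `𝔐₀[f]` itself, which is what keeps the
resonance broadening away from zero. -/
structure IsAdmissible (l1 l2 s M M' : ℝ) {d : ℕ} (f : Sp d → ℝ) : Prop where
  aestronglyMeasurable : AEStronglyMeasurable f
  integrable : Integrable (fun k => |f k| * omg l1 l2 k ^ s)
  wnorm_le : wnorm l1 l2 s f ≤ M
  le_M0 : M' ≤ M0 f

namespace IsAdmissible

lemma of_nonneg (hl1 : 0 < l1) (hl2 : 0 < l2) (hf0 : ∀ k, 0 ≤ f k)
    (hf : Integrable (fun k => |f k| * omg l1 l2 k ^ s)) (hM : wnorm l1 l2 s f ≤ M)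
    (hM' : M' ≤ ∫ k, |f k|) : IsAdmissible l1 l2 s M M' f where
  aestronglyMeasurable := by
    have hf_eq : f = fun k => |f k| * omg l1 l2 k ^ s * (omg l1 l2 k ^ s)⁻¹ := by
      funext k
      rw [mul_inv_cancel_right₀ (Real.rpow_pos_of_pos (omg_pos hl1 hl2 k) s).ne',
        abs_of_nonneg (hf0 k)]
    rw [hf_eq]
    exact hf.aestronglyMeasurable.mul (measurable_omg.pow_const s).inv.aestronglyMeasurable
  integrable := hf
  wnorm_le := hM
  le_M0 := by simpa only [M0, abs_of_nonneg (hf0 _)] using hM'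

lemma mono (hl1 : 0 < l1) (hl2 : 0 < l2) (hsr : s ≤ r) (hf : IsAdmissible l1 l2 r M M' f) :
    IsAdmissible l1 l2 s (√l1 ^ (s - r) * M) M' f where
  aestronglyMeasurable := hf.aestronglyMeasurable
  integrable :=
    integrable_abs_mul_omg_rpow_of_le hl1 hl2 hsr hf.aestronglyMeasurable hf.integrable
  wnorm_le := (wnorm_le_of_le hl1 hl2 hsr hf.integrable).trans (by gcongr; exact hf.wnorm_le)
  le_M0 := hf.le_M0

lemma integrable_abs_sub (hf : IsAdmissible l1 l2 s M M' f) (hg : IsAdmissible l1 l2 s M M' g) :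
    Integrable (fun k => |f k - g k| * omg l1 l2 k ^ s) :=
  integrable_abs_sub_mul_omg_rpow hf.aestronglyMeasurable hg.aestronglyMeasurable hf.integrable
    hg.integrable

lemma wnorm_sub_le_two_mul (hf : IsAdmissible l1 l2 s M M' f)
    (hg : IsAdmissible l1 l2 s M M' g) : wnorm l1 l2 s (fun k => f k - g k) ≤ 2 * M := by
  linarith [wnorm_sub_le hf.integrable hg.integrable, hf.wnorm_le, hg.wnorm_le]

lemma integrable_of_nonneg (hl1 : 0 < l1) (hl2 : 0 < l2) (hs : 0 ≤ s)
    (hf : IsAdmissible l1 l2 s M M' f) : Integrable f :=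
  (integrable_norm_iff hf.aestronglyMeasurable).1 <| by
    simpa only [Real.rpow_zero, mul_one, Real.norm_eq_abs] using (hf.mono hl1 hl2 hs).integrable

lemma abs_M0_sub_le (hl1 : 0 < l1) (hl2 : 0 < l2) (hs : 0 ≤ s)
    (hf : IsAdmissible l1 l2 s M M' f) (hg : IsAdmissible l1 l2 s M M' g) :
    |M0 f - M0 g| ≤ √l1 ^ (-s) * wnorm l1 l2 s (fun k => f k - g k) := by
  rw [M0, M0, ← integral_sub (hf.integrable_of_nonneg hl1 hl2 hs)
    (hg.integrable_of_nonneg hl1 hl2 hs)]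
  calc |∫ k, (f k - g k)| ≤ ∫ k, |f k - g k| := abs_integral_le_integral_abs
    _ = wnorm l1 l2 0 (fun k => f k - g k) := by simp only [wnorm, Real.rpow_zero, mul_one]
    _ ≤ √l1 ^ (0 - s) * wnorm l1 l2 s (fun k => f k - g k) :=
        wnorm_le_of_le hl1 hl2 hs (hf.integrable_abs_sub hg)
    _ = _ := by rw [zero_sub]

end IsAdmissible

end WeightedNorm

section CollisionKernel

variable {d : ℕ} {l1 l2 M' : ℝ} {f g : Sp d → ℝ} {k k1 k2 x : Sp d}

/-- The sum of squared norms in the resonance broadening, `Γ = triadSq · 𝔐₀[f]`. -/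
def triadSq {d : ℕ} (k k1 k2 : Sp d) : ℝ := ‖k‖ ^ 2 + ‖k1‖ ^ 2 + ‖k2‖ ^ 2

lemma triadSq_nonneg : 0 ≤ triadSq k k1 k2 := by
  unfold triadSq
  positivity

lemma Lor_nonneg (hf : 0 ≤ M0 f) (ζ : ℝ) : 0 ≤ Lor f ζ k k1 k2 := by
  unfold Lor Gam
  positivity

lemma triadSq_mul_Lor_le (hM' : 0 < M') (hf : M' ≤ M0 f) (ζ : ℝ) :
    triadSq k k1 k2 * Lor f ζ k k1 k2 ≤ 1 / M' := by
  have hm : 0 < M0 f := hM'.trans_le hf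
  rcases (triadSq_nonneg (k := k) (k1 := k1) (k2 := k2)).eq_or_lt with hs | hs
  · rw [← hs, zero_mul]
    positivity
  calc triadSq k k1 k2 * Lor f ζ k k1 k2
      ≤ triadSq k k1 k2 * (triadSq k k1 k2 * M0 f)⁻¹ := by
        gcongr
        exact div_sq_add_sq_le_inv (mul_pos hs hm) ζ
    _ = 1 / M0 f := by field_simp
    _ ≤ 1 / M' := by gcongr

lemma triadSq_mul_abs_Lor_sub_le (hM' : 0 < M') (hf : M' ≤ M0 f) (hg : M' ≤ M0 g) (ζ : ℝ) :
    triadSq k k1 k2 * |Lor f ζ k k1 k2 - Lor g ζ k k1 k2| ≤ |M0 f - M0 g| / M' ^ 2 := by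
  have hmf : 0 < M0 f := hM'.trans_le hf
  have hmg : 0 < M0 g := hM'.trans_le hg
  rcases (triadSq_nonneg (k := k) (k1 := k1) (k2 := k2)).eq_or_lt with hs | hs
  · rw [← hs, zero_mul]
    positivity
  set s := triadSq k k1 k2
  calc s * |Lor f ζ k k1 k2 - Lor g ζ k k1 k2|
      ≤ s * (|s * M0 f - s * M0 g| / (s * M0 f * (s * M0 g))) := by
        gcongr
        exact abs_div_sq_add_sq_sub_le (mul_pos hs hmf) (mul_pos hs hmg) ζ
    _ = |M0 f - M0 g| / (M0 f * M0 g) := by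
        rw [← mul_sub, abs_mul, abs_of_pos hs]
        field_simp
    _ ≤ |M0 f - M0 g| / (M' * M') := by gcongr
    _ = |M0 f - M0 g| / M' ^ 2 := by rw [sq]

lemma Vsq_nonneg : 0 ≤ Vsq k k1 k2 := by
  unfold Vsq
  positivity

lemma Vsq_le_norm_mul_triadSq (hx : x ∈ ({k, k1, k2} : Set (Sp d))) :
    Vsq k k1 k2 ≤ ‖x‖ * triadSq k k1 k2 := by
  unfold Vsq triadSq
  obtain rfl | rfl | rfl := hx
  · nlinarith [mul_nonneg (norm_nonneg x) (sq_nonneg (‖k1‖ - ‖k2‖)), norm_nonneg x]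
  · nlinarith [mul_nonneg (norm_nonneg x) (sq_nonneg (‖k‖ - ‖k2‖)), norm_nonneg x]
  · nlinarith [mul_nonneg (norm_nonneg x) (sq_nonneg (‖k‖ - ‖k1‖)), norm_nonneg x]

/-- The product `|V|² L_f` of interaction coefficient and Lorentzian on the triad `k, k₁, k₂`, which
multiplies the quadratic expression in both integrals of `Q[f]`. -/
def collisionKernel (l1 l2 : ℝ) {d : ℕ} (f : Sp d → ℝ) (k k1 k2 : Sp d) : ℝ :=
  Vsq k k1 k2 * Lor f (omg l1 l2 k - omg l1 l2 k1 - omg l1 l2 k2) k k1 k2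

lemma abs_collisionKernel_le (hM' : 0 < M') (hf : M' ≤ M0 f)
    (hx : x ∈ ({k, k1, k2} : Set (Sp d))) : |collisionKernel l1 l2 f k k1 k2| ≤ 1 / M' * ‖x‖ := by
  have hL := Lor_nonneg (k := k) (k1 := k1) (k2 := k2) (hM'.le.trans hf)
    (omg l1 l2 k - omg l1 l2 k1 - omg l1 l2 k2)
  rw [collisionKernel, abs_of_nonneg (mul_nonneg Vsq_nonneg hL)]
  calc _ ≤ ‖x‖ * triadSq k k1 k2 * _ :=
        mul_le_mul_of_nonneg_right (Vsq_le_norm_mul_triadSq hx) hL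
    _ ≤ ‖x‖ * (1 / M') := by
        rw [mul_assoc]
        gcongr
        exact triadSq_mul_Lor_le hM' hf _
    _ = 1 / M' * ‖x‖ := mul_comm _ _

lemma abs_collisionKernel_sub_le (hM' : 0 < M') (hf : M' ≤ M0 f) (hg : M' ≤ M0 g)
    (hx : x ∈ ({k, k1, k2} : Set (Sp d))) :
    |collisionKernel l1 l2 f k k1 k2 - collisionKernel l1 l2 g k k1 k2|
      ≤ |M0 f - M0 g| / M' ^ 2 * ‖x‖ := by
  rw [collisionKernel, collisionKernel, ← mul_sub, abs_mul, abs_of_nonneg Vsq_nonneg]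
  calc _ ≤ ‖x‖ * triadSq k k1 k2 * _ :=
        mul_le_mul_of_nonneg_right (Vsq_le_norm_mul_triadSq hx) (abs_nonneg _)
    _ ≤ ‖x‖ * (|M0 f - M0 g| / M' ^ 2) := by
        rw [mul_assoc]
        gcongr
        exact triadSq_mul_abs_Lor_sub_le hM' hf hg _
    _ = |M0 f - M0 g| / M' ^ 2 * ‖x‖ := mul_comm _ _

end CollisionKernel

section Triad

variable {d : ℕ} {l1 l2 N M M' : ℝ} {f g : Sp d → ℝ} {T : Sp d × Sp d → Sp d × Sp d}
  {y : Sp d × Sp d → Sp d}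

/-- The wave vectors of the resonant triad `k = k₁ + k₂`, parametrized by `z = (k₁, k₂)`. -/
def triad {d : ℕ} (z : Sp d × Sp d) : Set (Sp d) := {z.1 + z.2, z.1, z.2}

/-- `T` selects two distinct members of each triad. It is required to be a measure-preserving change
of variables; `norm_le` encodes that the third member is the sum or difference of the two. -/
structure IsTriadPair {d : ℕ} (T : Sp d × Sp d → Sp d × Sp d) : Prop where
  measurePreserving : MeasurePreserving T
  fst_mem : ∀ z, (T z).1 ∈ triad z
  snd_mem : ∀ z, (T z).2 ∈ triad z
  norm_le : ∀ z, ∀ x ∈ triad z, ‖x‖ ≤ ‖(T z).1‖ + ‖(T z).2‖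

lemma isTriadPair_id : IsTriadPair (fun z : Sp d × Sp d => z) where
  measurePreserving := MeasurePreserving.id _
  fst_mem _ := .inr (.inl rfl)
  snd_mem _ := .inr (.inr rfl)
  norm_le := by
    rintro z x (rfl | rfl | rfl)
    · exact norm_add_le _ _
    · exact le_add_of_nonneg_right (norm_nonneg _)
    · exact le_add_of_nonneg_left (norm_nonneg _)

lemma isTriadPair_add_fst : IsTriadPair (fun z : Sp d × Sp d => (z.1 + z.2, z.1)) where
  measurePreserving :=
    Measure.measurePreserving_swap.comp (measurePreserving_prod_add volume volume)
  fst_mem _ := .inl rfl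
  snd_mem _ := .inr (.inl rfl)
  norm_le := by
    rintro z x (rfl | rfl | rfl)
    · exact le_add_of_nonneg_right (norm_nonneg _)
    · exact le_add_of_nonneg_left (norm_nonneg _)
    · simpa using norm_sub_le (z.1 + z.2) z.1

lemma isTriadPair_add_snd : IsTriadPair (fun z : Sp d × Sp d => (z.1 + z.2, z.2)) where
  measurePreserving := measurePreserving_add_prod volume volume
  fst_mem _ := .inl rfl
  snd_mem _ := .inr (.inr rfl)
  norm_le := by
    rintro z x (rfl | rfl | rfl)
    · exact le_add_of_nonneg_right (norm_nonneg _)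
    · simpa using norm_sub_le (z.1 + z.2) z.2
    · exact le_add_of_nonneg_left (norm_nonneg _)

/-- The collision kernel on the triad of `z`, multiplied by the weight `ω ^ N` at its member
`y z`. -/
def weightedKernel (l1 l2 N : ℝ) {d : ℕ} (f : Sp d → ℝ) (y : Sp d × Sp d → Sp d)
    (z : Sp d × Sp d) : ℝ :=
  collisionKernel l1 l2 f (z.1 + z.2) z.1 z.2 * omg l1 l2 (y z) ^ N

lemma measurable_weightedKernel (hy : Measurable y) : Measurable (weightedKernel l1 l2 N f y) := by
  have := measurable_omg (d := d) (l1 := l1) (l2 := l2)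
  unfold weightedKernel collisionKernel Vsq Lor Gam
  fun_prop

namespace IsTriadPair

lemma abs_weightedKernel_le (hT : IsTriadPair T) (hl1 : 0 < l1) (hl2 : 0 < l2) (hN : 0 ≤ N)
    (hM' : 0 < M') (hf : M' ≤ M0 f) (hy : ∀ z, y z ∈ triad z) (z : Sp d × Sp d) :
    |weightedKernel l1 l2 N f y z| ≤ 1 / M' * weightConst l1 l2 N *
      (omg l1 l2 (T z).1 ^ N * omg l1 l2 (T z).2 ^ (N + 1)) :=
  abs_mul_omg_rpow_le hl1 hl2 hN (by positivity) (abs_collisionKernel_le hM' hf (hT.snd_mem z))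
    (hT.norm_le z _ (hy z))

lemma abs_weightedKernel_le_symm (hT : IsTriadPair T) (hl1 : 0 < l1) (hl2 : 0 < l2) (hN : 0 ≤ N)
    (hM' : 0 < M') (hf : M' ≤ M0 f) (hy : ∀ z, y z ∈ triad z) (z : Sp d × Sp d) :
    |weightedKernel l1 l2 N f y z| ≤ 1 / M' * weightConst l1 l2 N *
      (omg l1 l2 (T z).1 ^ (N + 1) * omg l1 l2 (T z).2 ^ N) := by
  rw [mul_comm (omg l1 l2 (T z).1 ^ _)]
  exact abs_mul_omg_rpow_le hl1 hl2 hN (by positivity)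
    (abs_collisionKernel_le hM' hf (hT.fst_mem z)) ((hT.norm_le z _ (hy z)).trans_eq (add_comm _ _))

lemma abs_weightedKernel_sub_le (hT : IsTriadPair T) (hl1 : 0 < l1) (hl2 : 0 < l2) (hN : 0 ≤ N)
    (hM' : 0 < M') (hf : M' ≤ M0 f) (hg : M' ≤ M0 g) (hy : ∀ z, y z ∈ triad z)
    (z : Sp d × Sp d) :
    |weightedKernel l1 l2 N f y z - weightedKernel l1 l2 N g y z| ≤
      |M0 f - M0 g| / M' ^ 2 * weightConst l1 l2 N *
        (omg l1 l2 (T z).1 ^ N * omg l1 l2 (T z).2 ^ (N + 1)) := by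
  rw [weightedKernel, weightedKernel, ← sub_mul]
  exact abs_mul_omg_rpow_le hl1 hl2 hN (by positivity)
    (abs_collisionKernel_sub_le hM' hf hg (hT.snd_mem z)) (hT.norm_le z _ (hy z))

lemma integrable_weightedKernel_mul (hT : IsTriadPair T) (hl1 : 0 < l1) (hl2 : 0 < l2) (hN : 0 ≤ N)
    (hM' : 0 < M') (hf : IsAdmissible l1 l2 (N + 1) M M' f) (hym : Measurable y)
    (hy : ∀ z, y z ∈ triad z) :
    Integrable (fun z => weightedKernel l1 l2 N f y z * (f (T z).1 * f (T z).2)) :=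
  integrable_kernel_mul hT.measurePreserving (measurable_weightedKernel hym).aestronglyMeasurable
    hf.aestronglyMeasurable hf.aestronglyMeasurable
    (hf.mono hl1 hl2 (le_add_of_nonneg_right zero_le_one)).integrable hf.integrable
    (hT.abs_weightedKernel_le hl1 hl2 hN hM' hf.le_M0 hy)

end IsTriadPair

/-- Lipschitz constant in `L¹_N` of one of the three quadratic terms of the collision rate. Its two
summands come from varying the broadening `Γ` and the densities, respectively. -/
def pairLipschitzConst (l1 l2 N M M' : ℝ) : ℝ :=
  weightConst l1 l2 N * (√l1 ^ (-(N + 1)) * M ^ 2 / M' ^ 2 + 2 * M / M')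

lemma pairLipschitzConst_pos (hl1 : 0 < l1) (hl2 : 0 < l2) (hM : 0 < M) (hM' : 0 < M') :
    0 < pairLipschitzConst l1 l2 N M M' := by
  have := weightConst_pos (N := N) hl1 hl2
  unfold pairLipschitzConst
  positivity

lemma IsTriadPair.integral_abs_weightedKernel_mul_sub_le (hT : IsTriadPair T) (hl1 : 0 < l1)
    (hl2 : 0 < l2) (hN : 0 ≤ N) (hM' : 0 < M') (hf : IsAdmissible l1 l2 (N + 1) M M' f)
    (hg : IsAdmissible l1 l2 (N + 1) M M' g) (hym : Measurable y) (hy : ∀ z, y z ∈ triad z) :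
    ∫ z, |weightedKernel l1 l2 N f y z * (f (T z).1 * f (T z).2)
        - weightedKernel l1 l2 N g y z * (g (T z).1 * g (T z).2)| ≤
      pairLipschitzConst l1 l2 N M M' * wnorm l1 l2 N (fun k => f k - g k) := by
  have hNN : N ≤ N + 1 := le_add_of_nonneg_right zero_le_one
  have hfN := hf.mono hl1 hl2 hNN
  have hgN := hg.mono hl1 hl2 hNN
  have hW := (weightConst_pos (N := N) hl1 hl2).le
  have hM : 0 ≤ M := wnorm_nonneg.trans hf.wnorm_le
  set D := wnorm l1 l2 N (fun k => f k - g k)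
  have hD : 0 ≤ D := wnorm_nonneg
  calc _ ≤ |M0 f - M0 g| / M' ^ 2 * weightConst l1 l2 N *
            (wnorm l1 l2 N f * wnorm l1 l2 (N + 1) f)
          + 1 / M' * weightConst l1 l2 N * (D * wnorm l1 l2 (N + 1) f)
          + 1 / M' * weightConst l1 l2 N * (wnorm l1 l2 (N + 1) g * D) :=
        integral_abs_quadratic_sub_le hT.measurePreserving
          (measurable_weightedKernel hym).aestronglyMeasurable
          (measurable_weightedKernel hym).aestronglyMeasurable
          hf.aestronglyMeasurable hg.aestronglyMeasurable hfN.integrable hf.integrable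
          hg.integrable (hfN.integrable_abs_sub hgN)
          (hT.abs_weightedKernel_sub_le hl1 hl2 hN hM' hf.le_M0 hg.le_M0 hy)
          (hT.abs_weightedKernel_le hl1 hl2 hN hM' hg.le_M0 hy)
          (hT.abs_weightedKernel_le_symm hl1 hl2 hN hM' hg.le_M0 hy)
    _ ≤ √l1 ^ (-N) * D / M' ^ 2 * weightConst l1 l2 N * (√l1 ^ (N - (N + 1)) * M * M)
          + 1 / M' * weightConst l1 l2 N * (D * M) + 1 / M' * weightConst l1 l2 N * (M * D) := by
        gcongr
        · exact mul_nonneg wnorm_nonneg wnorm_nonneg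
        · exact hfN.abs_M0_sub_le hl1 hl2 hN hgN
        · exact wnorm_nonneg
        · exact hfN.wnorm_le
        · exact hf.wnorm_le
        · exact hf.wnorm_le
        · exact hg.wnorm_le
    _ = pairLipschitzConst l1 l2 N M M' * D := by
        rw [pairLipschitzConst, (by ring : -(N + 1) = -N + (N - (N + 1))),
          Real.rpow_add (by positivity)]
        ring

end Triad

section CollisionOperator

variable {d : ℕ} {l1 l2 N M M' : ℝ} {f g : Sp d → ℝ} {y : Sp d × Sp d → Sp d}

/-- The integrand of the collision operator on the triad `k = k₁ + k₂` with `z = (k₁, k₂)`. The same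
rate is integrated in both parts of `Q[f]`: over `(k₁, k - k₁)` for the gain at `k`, and over
`(k, k₂)` for the loss. -/
def collisionRate (l1 l2 : ℝ) {d : ℕ} (f : Sp d → ℝ) (z : Sp d × Sp d) : ℝ :=
  collisionKernel l1 l2 f (z.1 + z.2) z.1 z.2 *
    (f z.1 * f z.2 - f (z.1 + z.2) * f z.1 - f (z.1 + z.2) * f z.2)

lemma Qop_eq (k : Sp d) :
    Qop l1 l2 f k = (∫ k1, collisionRate l1 l2 f (k1, k - k1))
      - 2 * ∫ k2, collisionRate l1 l2 f (k, k2) := by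
  simp only [Qop, collisionRate, collisionKernel, add_sub_cancel, mul_comm (f k) (f (k + _))]

lemma collisionRate_mul_omg_rpow (z : Sp d × Sp d) :
    collisionRate l1 l2 f z * omg l1 l2 (y z) ^ N =
      weightedKernel l1 l2 N f y z * (f z.1 * f z.2)
        - weightedKernel l1 l2 N f y z * (f (z.1 + z.2) * f z.1)
        - weightedKernel l1 l2 N f y z * (f (z.1 + z.2) * f z.2) := by
  rw [collisionRate, weightedKernel]
  ring

lemma integrable_collisionRate_mul_omg_rpow (hl1 : 0 < l1) (hl2 : 0 < l2) (hN : 0 ≤ N)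
    (hM' : 0 < M') (hf : IsAdmissible l1 l2 (N + 1) M M' f) (hym : Measurable y)
    (hy : ∀ z, y z ∈ triad z) :
    Integrable (fun z => collisionRate l1 l2 f z * omg l1 l2 (y z) ^ N) := by
  simp only [collisionRate_mul_omg_rpow]
  exact ((isTriadPair_id.integrable_weightedKernel_mul hl1 hl2 hN hM' hf hym hy).sub
    (isTriadPair_add_fst.integrable_weightedKernel_mul hl1 hl2 hN hM' hf hym hy)).sub
    (isTriadPair_add_snd.integrable_weightedKernel_mul hl1 hl2 hN hM' hf hym hy)

lemma integrable_collisionRate (hl1 : 0 < l1) (hl2 : 0 < l2) (hN : 0 ≤ N) (hM' : 0 < M')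
    (hf : IsAdmissible l1 l2 (N + 1) M M' f) : Integrable (collisionRate l1 l2 f) := by
  have hf1 := hf.mono hl1 hl2 (by linarith : (0 : ℝ) + 1 ≤ N + 1)
  simpa only [Real.rpow_zero, mul_one] using
    integrable_collisionRate_mul_omg_rpow hl1 hl2 le_rfl hM' hf1 measurable_fst
      fun _ => .inr (.inl rfl)

lemma integral_abs_collisionRate_sub_mul_le (hl1 : 0 < l1) (hl2 : 0 < l2) (hN : 0 ≤ N)
    (hM' : 0 < M') (hf : IsAdmissible l1 l2 (N + 1) M M' f)
    (hg : IsAdmissible l1 l2 (N + 1) M M' g) (hym : Measurable y) (hy : ∀ z, y z ∈ triad z) :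
    ∫ z, |(collisionRate l1 l2 f z - collisionRate l1 l2 g z) * omg l1 l2 (y z) ^ N| ≤
      3 * pairLipschitzConst l1 l2 N M M' * wnorm l1 l2 N (fun k => f k - g k) := by
  have hint {T : Sp d × Sp d → Sp d × Sp d} (hT : IsTriadPair T) :=
    (hT.integrable_weightedKernel_mul hl1 hl2 hN hM' hf hym hy).sub
      (hT.integrable_weightedKernel_mul hl1 hl2 hN hM' hg hym hy)
  have hle {T : Sp d × Sp d → Sp d × Sp d} (hT : IsTriadPair T) :=
    hT.integral_abs_weightedKernel_mul_sub_le hl1 hl2 hN hM' hf hg hym hy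
  have hsum := integral_abs_sub_sub_le (hint isTriadPair_id) (hint isTriadPair_add_fst)
    (hint isTriadPair_add_snd)
  simp only [Pi.sub_apply] at hsum
  calc _ = _ := integral_congr_ae (.of_forall fun z => congrArg abs ?_)
    _ ≤ _ := hsum
    _ ≤ _ := by linarith [hle isTriadPair_id, hle isTriadPair_add_fst, hle isTriadPair_add_snd]
  rw [sub_mul, collisionRate_mul_omg_rpow, collisionRate_mul_omg_rpow]
  ring

lemma ae_Qop_sub_eq_integral (hl1 : 0 < l1) (hl2 : 0 < l2) (hN : 0 ≤ N) (hM' : 0 < M')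
    (hf : IsAdmissible l1 l2 (N + 1) M M' f) (hg : IsAdmissible l1 l2 (N + 1) M M' g) :
    ∀ᵐ k, Qop l1 l2 f k - Qop l1 l2 g k = ∫ q,
      (collisionRate l1 l2 f (q, k - q) - collisionRate l1 l2 g (q, k - q)
        - (collisionRate l1 l2 f (k, q) - collisionRate l1 l2 g (k, q))
        - (collisionRate l1 l2 f (k, q) - collisionRate l1 l2 g (k, q))) := by
  have hS : MeasurePreserving fun z : Sp d × Sp d => (z.2, z.1 - z.2) :=
    measurePreserving_prod_sub_swap volume volume
  have hRf := integrable_collisionRate hl1 hl2 hN hM' hf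
  have hRg := integrable_collisionRate hl1 hl2 hN hM' hg
  filter_upwards [hRf.prod_right_ae, hRg.prod_right_ae,
    (hS.integrable_comp_of_integrable hRf).prod_right_ae,
    (hS.integrable_comp_of_integrable hRg).prod_right_ae] with k hlossf hlossg hgainf hgaing
  simp only [Function.comp_def] at hgainf hgaing
  have hloss : Integrable fun q => collisionRate l1 l2 f (k, q) - collisionRate l1 l2 g (k, q) :=
    hlossf.sub hlossg
  have hgain : Integrable fun q =>
      collisionRate l1 l2 f (q, k - q) - collisionRate l1 l2 g (q, k - q) := hgainf.sub hgaing
  calc Qop l1 l2 f k - Qop l1 l2 g k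
      = (∫ q, collisionRate l1 l2 f (q, k - q)) - (∫ q, collisionRate l1 l2 g (q, k - q))
        - ((∫ q, collisionRate l1 l2 f (k, q)) - ∫ q, collisionRate l1 l2 g (k, q))
        - ((∫ q, collisionRate l1 l2 f (k, q)) - ∫ q, collisionRate l1 l2 g (k, q)) := by
        rw [Qop_eq, Qop_eq]
        ring
    _ = _ := by
        rw [← integral_sub hgainf hgaing, ← integral_sub hlossf hlossg]
        exact ((integral_sub (hgain.sub hloss) hloss).trans
          (congrArg (· - _) (integral_sub hgain hloss))).symm

lemma integrable_collisionRate_sub_mul_omg_rpow (hl1 : 0 < l1) (hl2 : 0 < l2) (hN : 0 ≤ N)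
    (hM' : 0 < M') (hf : IsAdmissible l1 l2 (N + 1) M M' f)
    (hg : IsAdmissible l1 l2 (N + 1) M M' g) (hym : Measurable y) (hy : ∀ z, y z ∈ triad z) :
    Integrable fun z =>
      (collisionRate l1 l2 f z - collisionRate l1 l2 g z) * omg l1 l2 (y z) ^ N := by
  simp only [sub_mul]
  exact (integrable_collisionRate_mul_omg_rpow hl1 hl2 hN hM' hf hym hy).sub
    (integrable_collisionRate_mul_omg_rpow hl1 hl2 hN hM' hg hym hy)

lemma wnorm_Qop_sub_le (hl1 : 0 < l1) (hl2 : 0 < l2) (hN : 0 ≤ N) (hM' : 0 < M')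
    (hf : IsAdmissible l1 l2 (N + 1) M M' f) (hg : IsAdmissible l1 l2 (N + 1) M M' g) :
    wnorm l1 l2 N (fun k => Qop l1 l2 f k - Qop l1 l2 g k) ≤
      9 * pairLipschitzConst l1 l2 N M M' * wnorm l1 l2 N (fun k => f k - g k) := by
  have hS : MeasurePreserving fun z : Sp d × Sp d => (z.2, z.1 - z.2) :=
    measurePreserving_prod_sub_swap volume volume
  set Δ := fun z => collisionRate l1 l2 f z - collisionRate l1 l2 g z
  have hloss : Integrable fun z : Sp d × Sp d => Δ z * omg l1 l2 z.1 ^ N :=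
    integrable_collisionRate_sub_mul_omg_rpow hl1 hl2 hN hM' hf hg measurable_fst
      fun z => .inr (.inl rfl)
  have hsum : Integrable fun z : Sp d × Sp d => Δ z * omg l1 l2 (z.1 + z.2) ^ N :=
    integrable_collisionRate_sub_mul_omg_rpow hl1 hl2 hN hM' hf hg measurable_add
      fun z => .inl rfl
  have hgain : Integrable fun z : Sp d × Sp d => Δ (z.2, z.1 - z.2) * omg l1 l2 z.1 ^ N := by
    simpa only [Function.comp_def, add_sub_cancel] using hS.integrable_comp_of_integrable hsum
  calc wnorm l1 l2 N (fun k => Qop l1 l2 f k - Qop l1 l2 g k)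
      = ∫ k, |∫ q, (Δ (q, k - q) - Δ (k, q) - Δ (k, q))| * omg l1 l2 k ^ N := by
        refine integral_congr_ae ?_
        filter_upwards [ae_Qop_sub_eq_integral hl1 hl2 hN hM' hf hg] with k hk
        rw [hk]
    _ ≤ ∫ z : Sp d × Sp d, |(Δ (z.2, z.1 - z.2) - Δ z - Δ z) * omg l1 l2 z.1 ^ N| :=
        integral_abs_integral_mul_le
          (F := fun z : Sp d × Sp d => Δ (z.2, z.1 - z.2) - Δ z - Δ z) (omg_rpow_nonneg N)
          (by
            simp only [sub_mul]
            exact (hgain.sub hloss).sub hloss)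
    _ ≤ (∫ z : Sp d × Sp d, |Δ (z.2, z.1 - z.2) * omg l1 l2 z.1 ^ N|)
          + (∫ z, |Δ z * omg l1 l2 z.1 ^ N|) + ∫ z, |Δ z * omg l1 l2 z.1 ^ N| := by
        simpa only [sub_mul] using integral_abs_sub_sub_le hgain hloss hloss
    _ = (∫ z, |Δ z * omg l1 l2 (z.1 + z.2) ^ N|)
          + (∫ z, |Δ z * omg l1 l2 z.1 ^ N|) + ∫ z, |Δ z * omg l1 l2 z.1 ^ N| := by
        rw [← integral_comp_of_measurePreserving hS hsum.abs.aestronglyMeasurable]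
        simp only [add_sub_cancel]
    _ ≤ 9 * pairLipschitzConst l1 l2 N M M' * wnorm l1 l2 N (fun k => f k - g k) := by
        have hle {y : Sp d × Sp d → Sp d} (hym : Measurable y) (hy : ∀ z, y z ∈ triad z) :=
          integral_abs_collisionRate_sub_mul_le hl1 hl2 hN hM' hf hg hym hy
        linarith [hle measurable_add fun z => .inl rfl,
          hle measurable_fst fun z => .inr (.inl rfl)]

end CollisionOperator

theorem collision_holder_continuity_general {d : ℕ} (l1 l2 M M' N θ : ℝ)
    (hl1 : 0 < l1) (hl2 : 0 < l2) (hM : 0 < M) (hM' : 0 < M') (hN : 0 ≤ N)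
    (hθ : 0 ≤ θ) (hθ_le : θ ≤ 1) :
    ∃ C > (0 : ℝ), ∀ f g : Sp d → ℝ,
      IsAdmissible l1 l2 (N + 1) M M' f → IsAdmissible l1 l2 (N + 1) M M' g →
      wnorm l1 l2 N (fun k => Qop l1 l2 f k - Qop l1 l2 g k) ≤
        C * wnorm l1 l2 N (fun k => f k - g k) ^ θ := by
  have hK := pairLipschitzConst_pos (N := N) hl1 hl2 hM hM'
  set R := 2 * (√l1 ^ (N - (N + 1)) * M)
  refine ⟨9 * pairLipschitzConst l1 l2 N M M' * R ^ (1 - θ), by positivity, fun f g hf hg => ?_⟩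
  have hNN : N ≤ N + 1 := le_add_of_nonneg_right zero_le_one
  have hR : wnorm l1 l2 N (fun k => f k - g k) ≤ R :=
    (hf.mono hl1 hl2 hNN).wnorm_sub_le_two_mul (hg.mono hl1 hl2 hNN)
  refine (wnorm_Qop_sub_le hl1 hl2 hN hM' hf hg).trans ?_
  rw [mul_assoc _ (R ^ _)]
  gcongr
  exact le_rpow_one_sub_mul_rpow wnorm_nonneg hR hθ hθ_le

/-- Hölder continuity of the collision operator: for M, M' > 0 and N ≥ 0,
there is C_{M,M',N} > 0 such that for all nonnegative g, h with L¹_{N+2} norms ≤ M and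
L¹ norms ≥ M', ‖Q[g] − Q[h]‖_{L¹_N} ≤ C·‖g − h‖_{L¹_N}^{1/2}. -/
theorem collision_holder_continuity {d : ℕ} (hd : 2 ≤ d) (l1 l2 M M' N : ℝ)
    (hl1 : 0 < l1) (hl2 : 0 < l2) (hM : 0 < M) (hM' : 0 < M') (hN : 0 ≤ N) :
    ∃ C > (0 : ℝ), ∀ g h : Sp d → ℝ,
      (∀ k, 0 ≤ g k) → (∀ k, 0 ≤ h k) →
      Integrable (fun k => |g k| * omg l1 l2 k ^ (N + 2)) →
      Integrable (fun k => |h k| * omg l1 l2 k ^ (N + 2)) →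
      wnorm l1 l2 (N + 2) g ≤ M → wnorm l1 l2 (N + 2) h ≤ M →
      M' ≤ ∫ k, |g k| → M' ≤ ∫ k, |h k| →
      wnorm l1 l2 N (fun k => Qop l1 l2 g k - Qop l1 l2 h k) ≤
        C * wnorm l1 l2 N (fun k => g k - h k) ^ ((1 : ℝ) / 2) := by
  obtain ⟨C, hC, hQ⟩ := collision_holder_continuity_general (d := d) l1 l2
    (√l1 ^ (N + 1 - (N + 2)) * M) M' N (1 / 2) hl1 hl2 (by positivity) hM' hN (by norm_num)
    (by norm_num)
  exact ⟨C, hC, fun g h hg0 hh0 hg hh hgM hhM hgM' hhM' => hQ g h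
    ((IsAdmissible.of_nonneg hl1 hl2 hg0 hg hgM hgM').mono hl1 hl2 (by linarith))
    ((IsAdmissible.of_nonneg hl1 hl2 hh0 hh hhM hhM').mono hl1 hl2 (by linarith))⟩
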